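/- arXiv:1903.08719 — 2 statements merged into one kernel-verified Lean document; each statement's English description precedes it below -/
import Mathlib

section
/- Let B be the Steiner triple system on Z_19 obtained by developing the base blocks {0,1,6}, {0,2,10}, {0,3,7} modulo 19. For every point x ∈ Z_19 there exists an almost parallel class of this system (six pairwise disjoint blocks covering all points except one) that does not contain x; in particular, each translate of the almost parallel class {1,3,11}, {2,15,16}, {4,17,18}, {5,8,12}, {6,9,13}, {7,10,14} is again an almost parallel class. -/
/-- `B` is (the block set of) a partial Steiner triple system on the point set `X`:
every block has 3 points and every pair of distinct points lies in at most one block. -/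
def isPSTS {X : Type*} [DecidableEq X] (B : Finset (Finset X)) : Prop :=
  (∀ b ∈ B, b.card = 3) ∧
  ∀ p q : X, p ≠ q → (B.filter (fun b => p ∈ b ∧ q ∈ b)).card ≤ 1

/-- `B` is (the block set of) a Steiner triple system on the point set `X`:
every block has 3 points and every pair of distinct points lies in exactly one block. -/
def isSTS {X : Type*} [DecidableEq X] (B : Finset (Finset X)) : Prop :=
  (∀ b ∈ B, b.card = 3) ∧
  ∀ p q : X, p ≠ q → (B.filter (fun b => p ∈ b ∧ q ∈ b)).card = 1

/-- The finset `S` can be partitioned into blocks of `B`. -/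
def blocksPartition {X : Type*} [DecidableEq X] (B : Finset (Finset X)) (S : Finset X) : Prop :=
  ∃ P : Finset (Finset X), P ⊆ B ∧
    (∀ b₁ ∈ P, ∀ b₂ ∈ P, b₁ ≠ b₂ → Disjoint b₁ b₂) ∧ P.biUnion id = S

/-- `A` is an almost parallel class of `B`: a set of pairwise disjoint blocks
covering all points of `X` except exactly one. -/
def isAPC {X : Type*} [DecidableEq X] [Fintype X] (B A : Finset (Finset X)) : Prop :=
  A ⊆ B ∧ (∀ b₁ ∈ A, ∀ b₂ ∈ A, b₁ ≠ b₂ → Disjoint b₁ b₂) ∧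
    ∃ y : X, A.biUnion id = Finset.univ.erase y

/-- `B` is sequenceable: there is a sequencing of the points (a bijection from
`Fin n` to `X`) such that no proper segment can be partitioned into blocks of `B`. -/
def sequenceable {X : Type*} [DecidableEq X] [Fintype X] (B : Finset (Finset X)) : Prop :=
  ∃ f : Fin (Fintype.card X) ≃ X,
    ∀ i j : Fin (Fintype.card X), i ≤ j →
      ¬((i : ℕ) = 0 ∧ (j : ℕ) = Fintype.card X - 1) →
      ¬ blocksPartition B ((Finset.Icc i j).image f)

/-- The blocks obtained by developing the base blocks modulo 19. -/
def dev19 : Finset (Finset (ZMod 19)) :=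
  Finset.univ.biUnion fun t : ZMod 19 =>
    ({{0,1,6}, {0,2,10}, {0,3,7}} : Finset (Finset (ZMod 19))).image (fun b => b.image (· + t))

/-- The almost parallel class `{1,3,11}, {2,15,16}, {4,17,18}, {5,8,12}, {6,9,13}, {7,10,14}`. -/
def apc19 : Finset (Finset (ZMod 19)) :=
  {({1,3,11} : Finset (ZMod 19)), {2,15,16}, {4,17,18}, {5,8,12}, {6,9,13}, {7,10,14}}

/-! Translations permute the blocks of a developed system, so they carry almost parallel classes to
almost parallel classes; since they act transitively on the points, the uncovered point of a single
almost parallel class can be moved to any prescribed `x`. The six triples of `apc19`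
cover the `18 = 6 * 3` nonzero points, which forces them to be disjoint. -/

open Finset Function

theorem pairwiseDisjoint_of_sum_card_le_card_biUnion {ι X : Type*} [DecidableEq X] {s : Finset ι}
    {f : ι → Finset X} (h : ∑ i ∈ s, #(f i) ≤ #(s.biUnion f)) :
    (s : Set ι).PairwiseDisjoint f := by
  classical
  intro i hi j hj hij
  let U := (s.erase i).biUnion f
  have hunion : s.biUnion f = f i ∪ U := by rw [← biUnion_insert, insert_erase hi]
  have hsum : #(f i) + ∑ k ∈ s.erase i, #(f k) = ∑ k ∈ s, #(f k) :=
    add_sum_erase s (fun k => #(f k)) hi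
  have hU : #U ≤ ∑ k ∈ s.erase i, #(f k) := card_biUnion_le
  have hinter : #(f i ∪ U) + #(f i ∩ U) = #(f i) + #U := card_union_add_card_inter _ _
  have hdisj : Disjoint (f i) U := by
    rw [disjoint_iff_inter_eq_empty, ← card_eq_zero]
    rw [hunion] at h
    lia
  exact hdisj.mono_right (subset_biUnion_of_mem f (mem_erase.mpr ⟨hij.symm, hj⟩))

section Image

variable {X Y : Type*} [DecidableEq X] [DecidableEq Y]

theorem biUnion_id_image_image (A : Finset (Finset X)) (f : X → Y) :
    (A.image (image f)).biUnion id = (A.biUnion id).image f := by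
  rw [image_biUnion, biUnion_image]
  rfl

theorem image_univ_erase [Fintype X] [Fintype Y] {f : X → Y} (hf : Bijective f) (y : X) :
    (univ.erase y).image f = univ.erase (f y) := by
  rw [image_erase hf.injective, image_univ_of_surjective hf.surjective]

theorem isAPC.image_of_bijective [Fintype X] [Fintype Y] {B A : Finset (Finset X)}
    {C : Finset (Finset Y)} (hA : isAPC B A) {f : X → Y} (hf : Bijective f)
    (hBC : ∀ b ∈ B, b.image f ∈ C) : isAPC C (A.image (image f)) := by
  obtain ⟨hAB, hdisj, y, hy⟩ := hA
  refine ⟨image_subset_iff.mpr fun b hb => hBC b (hAB hb), ?_, f y, ?_⟩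
  · simp only [forall_mem_image]
    intro b₁ hb₁ b₂ hb₂ hne
    exact (disjoint_image hf.injective).mpr (hdisj b₁ hb₁ b₂ hb₂ (ne_of_apply_ne _ hne))
  · rw [biUnion_id_image_image, hy, image_univ_erase hf]

end Image

section Development

variable {G : Type*} [Fintype G] [DecidableEq G]

/-- The development of the base blocks `S` over `G`: the set of all right translates `b + t` of
members `b` of `S`, with `+` not assumed commutative. -/
def development [Add G] (S : Finset (Finset G)) : Finset (Finset G) :=
  univ.biUnion fun t : G => S.image fun b => b.image (· + t)

theorem mem_development [Add G] {S : Finset (Finset G)} {b : Finset G} :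
    b ∈ development S ↔ ∃ t : G, ∃ c ∈ S, c.image (· + t) = b := by
  simp only [development, mem_biUnion, mem_univ, true_and, mem_image]

theorem image_add_right_mem_development [AddSemigroup G] {S : Finset (Finset G)}
    {b : Finset G} (hb : b ∈ development S) (t : G) : b.image (· + t) ∈ development S := by
  obtain ⟨s, c, hc, rfl⟩ := mem_development.mp hb
  refine mem_development.mpr ⟨s + t, c, hc, ?_⟩
  simp only [image_image, comp_def, add_assoc]

variable [AddGroup G]

theorem isAPC.translate {S A : Finset (Finset G)} (hA : isAPC (development S) A) (t : G) :
    isAPC (development S) (A.image fun b => b.image (· + t)) :=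
  hA.image_of_bijective (AddGroup.addRight_bijective t)
    fun _ hb => image_add_right_mem_development hb t

theorem isAPC.exists_isAPC_notMem {S A : Finset (Finset G)} (hA : isAPC (development S) A)
    (x : G) : ∃ A' : Finset (Finset G), isAPC (development S) A' ∧ x ∉ A'.biUnion id := by
  obtain ⟨y, hy⟩ := hA.2.2
  refine ⟨_, hA.translate (-y + x), ?_⟩
  have hcover : (A.image fun b => b.image (· + (-y + x))).biUnion id = univ.erase x := by
    rw [biUnion_id_image_image, hy, image_univ_erase (AddGroup.addRight_bijective (-y + x)),
      add_neg_cancel_left]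
  exact hcover ▸ notMem_erase x univ

end Development

theorem dev19_eq_development : dev19 = development {{0,1,6}, {0,2,10}, {0,3,7}} := rfl

theorem apc19_subset_dev19 : apc19 ⊆ dev19 := by
  intro b hb
  rw [dev19_eq_development, mem_development]
  simp only [apc19, mem_insert, mem_singleton] at hb
  rcases hb with rfl | rfl | rfl | rfl | rfl | rfl
  · exact ⟨1, {0,2,10}, by decide⟩
  · exact ⟨15, {0,1,6}, by decide⟩
  · exact ⟨17, {0,1,6}, by decide⟩
  · exact ⟨5, {0,3,7}, by decide⟩
  · exact ⟨6, {0,3,7}, by decide⟩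
  · exact ⟨7, {0,3,7}, by decide⟩

theorem biUnion_apc19 : apc19.biUnion id = univ.erase 0 := by
  decide +kernel

theorem apc19_pairwiseDisjoint : (apc19 : Set (Finset (ZMod 19))).PairwiseDisjoint id := by
  have hsum : ∑ b ∈ apc19, #b = 18 := by decide
  have hcard : #(apc19.biUnion id) = 18 := by
    rw [biUnion_apc19, card_erase_of_mem (mem_univ 0), card_univ, ZMod.card]
  exact pairwiseDisjoint_of_sum_card_le_card_biUnion (hsum.trans hcard.symm).le

theorem isAPC_apc19 : isAPC dev19 apc19 :=
  ⟨apc19_subset_dev19, fun _ hb₁ _ hb₂ => apc19_pairwiseDisjoint hb₁ hb₂, 0, biUnion_apc19⟩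

theorem stmt5 :
    (∀ t : ZMod 19, isAPC dev19 (apc19.image (fun b => b.image (· + t)))) ∧
    (∀ x : ZMod 19, ∃ A : Finset (Finset (ZMod 19)),
      isAPC dev19 A ∧ x ∉ A.biUnion id) := by
  have hapc := isAPC_apc19
  rw [dev19_eq_development] at hapc ⊢
  exact ⟨hapc.translate, hapc.exists_isAPC_notMem⟩
end

section
/- The Steiner triple system of order 43 on Z_43 obtained by developing the base blocks {0,1,16}, {0,2,14}, {0,3,11}, {0,4,37}, {0,5,25}, {0,7,24}, {0,9,22} modulo 43 is nonsequenceable; moreover, for every point x ∈ Z_43 there exists an almost parallel class of this system that does not contain x. -/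
/-- The blocks obtained by developing the base blocks modulo 43. -/
def dev43 : Finset (Finset (ZMod 43)) :=
  Finset.univ.biUnion fun t : ZMod 43 =>
    ({{0,1,16}, {0,2,14}, {0,3,11}, {0,4,37}, {0,5,25}, {0,7,24}, {0,9,22}} : Finset (Finset (ZMod 43))).image (fun b => b.image (· + t))

/-!
If the points other than `x` can be partitioned into blocks for every point `x`, then no sequencing
works: the segment obtained by deleting the first point of the sequence is such a set. The
translations of `ℤ/43` act transitively on points and preserve the developed system, so a single
almost parallel class, missing `0`, is enough.
-/

open Finset

section BlockSystem

variable {X Y : Type*} [DecidableEq X] [DecidableEq Y]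

lemma blocksPartition.image {B : Finset (Finset X)} {C : Finset (Finset Y)} {S : Finset X}
    {f : X → Y} (hS : blocksPartition B S) (hf : f.Injective) (hBC : ∀ b ∈ B, b.image f ∈ C) :
    blocksPartition C (S.image f) := by
  obtain ⟨P, hPB, hdisj, rfl⟩ := hS
  refine ⟨P.image (·.image f), image_subset_iff.2 fun b hb => hBC b (hPB hb), ?_, ?_⟩
  · simp only [forall_mem_image]
    exact fun b hb c hc hne => (disjoint_image hf).2 (hdisj b hb c hc (ne_of_apply_ne _ hne))
  · simp only [image_biUnion, biUnion_image, id]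

lemma blocksPartition_of_pairwise_disjoint {B : Finset (Finset X)} {S : Finset X}
    {L : List (Finset X)} (hLB : ∀ b ∈ L, b ∈ B) (hdisj : L.Pairwise Disjoint)
    (hunion : L.toFinset.biUnion id = S) : blocksPartition B S := by
  refine ⟨L.toFinset, fun b hb => hLB b (List.mem_toFinset.1 hb), fun b hb c hc hne => ?_, hunion⟩
  exact hdisj.forall (List.mem_toFinset.1 hb) (List.mem_toFinset.1 hc) hne

variable [Fintype X] {B : Finset (Finset X)}

lemma blocksPartition_univ_erase_iff_exists_isAPC {x : X} :
    blocksPartition B (univ.erase x) ↔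
      ∃ A : Finset (Finset X), isAPC B A ∧ x ∉ A.biUnion id := by
  constructor
  · rintro ⟨A, hAB, hdisj, hunion⟩
    exact ⟨A, ⟨hAB, hdisj, x, hunion⟩, hunion ▸ notMem_erase x univ⟩
  · rintro ⟨A, ⟨hAB, hdisj, y, hunion⟩, hx⟩
    obtain rfl : x = y := by simpa [hunion] using hx
    exact ⟨A, hAB, hdisj, hunion⟩

lemma fin_Icc_one_last_eq_univ_erase_zero {n : ℕ} (hn : 1 < n) :
    Icc (⟨1, hn⟩ : Fin n) ⟨n - 1, by lia⟩ = univ.erase ⟨0, by lia⟩ := by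
  ext i
  simp only [mem_Icc, mem_erase, mem_univ, and_true, Fin.le_def, ne_eq, Fin.ext_iff]
  lia

theorem not_sequenceable_of_forall_exists_isAPC [Nontrivial X]
    (hB : ∀ x, ∃ A : Finset (Finset X), isAPC B A ∧ x ∉ A.biUnion id) :
    ¬ sequenceable B := by
  rintro ⟨f, hf⟩
  have hcard : 1 < Fintype.card X := Fintype.one_lt_card
  let first : Fin (Fintype.card X) := ⟨0, by lia⟩
  have tail_eq : (Icc ⟨1, hcard⟩ ⟨Fintype.card X - 1, by lia⟩).image f = univ.erase (f first) := by
    rw [fin_Icc_one_last_eq_univ_erase_zero hcard, image_erase f.injective, image_univ_equiv]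
  refine hf ⟨1, hcard⟩ ⟨Fintype.card X - 1, by lia⟩ (Fin.mk_le_mk.2 (by lia)) (by simp) ?_
  rw [tail_eq]
  exact blocksPartition_univ_erase_iff_exists_isAPC.2 (hB (f first))

end BlockSystem

section Develop

variable {G : Type*} [DecidableEq G] [Fintype G]

/-- The development of the base blocks `𝓑` over a finite additive group `G`: the set of all right
translates `b + t` with `b ∈ 𝓑` and `t : G`. -/
def develop [Add G] (𝓑 : Finset (Finset G)) : Finset (Finset G) :=
  univ.biUnion fun t : G => 𝓑.image fun b => b.image (· + t)

lemma mem_develop [Add G] {𝓑 : Finset (Finset G)} {c : Finset G} :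
    c ∈ develop 𝓑 ↔ ∃ b ∈ 𝓑, ∃ t : G, b.image (· + t) = c := by
  simp only [develop, mem_biUnion, mem_univ, true_and, mem_image]
  tauto

lemma image_add_right_mem_develop [AddSemigroup G] {𝓑 : Finset (Finset G)} {c : Finset G}
    (hc : c ∈ develop 𝓑) (s : G) : c.image (· + s) ∈ develop 𝓑 := by
  obtain ⟨b, hb, t, rfl⟩ := mem_develop.1 hc
  refine mem_develop.2 ⟨b, hb, t + s, ?_⟩
  simp only [image_image, Function.comp_def, add_assoc]

lemma blocksPartition_develop_univ_erase [AddGroup G] {𝓑 : Finset (Finset G)} {y : G}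
    (hy : blocksPartition (develop 𝓑) (univ.erase y)) (x : G) :
    blocksPartition (develop 𝓑) (univ.erase x) := by
  have translate_erase : (univ.erase y).image (· + (-y + x)) = univ.erase x := by
    rw [image_erase (add_left_injective _), image_univ_of_surjective (add_right_surjective _),
      add_neg_cancel_left]
  rw [← translate_erase]
  exact hy.image (add_left_injective _) fun _ hb => image_add_right_mem_develop hb _

end Develop

/-- The base blocks of `dev43`. -/
def baseBlocks43 : Finset (Finset (ZMod 43)) :=
  {{0, 1, 16}, {0, 2, 14}, {0, 3, 11}, {0, 4, 37}, {0, 5, 25}, {0, 7, 24}, {0, 9, 22}}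

lemma dev43_eq_develop : dev43 = develop baseBlocks43 := rfl

/-- An almost parallel class of `dev43` missing `0`. A translate `b + t` of a base block `b` has its
points listed in the order of those of `b`, so that the first one is `t`. The class is a `List`
rather than a `Finset` to spare the kernel comparisons of blocks. -/
def almostParallelClass43 : List (Finset (ZMod 43)) :=
  [{1, 2, 17}, {3, 4, 19}, {5, 6, 21}, {7, 8, 23}, {10, 11, 26},
    {13, 14, 29}, {36, 37, 9}, {24, 27, 35}, {30, 33, 41}, {28, 32, 22},
    {15, 20, 40}, {34, 39, 16}, {18, 25, 42}, {31, 38, 12}]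

lemma mem_develop_of_mem_almostParallelClass43 :
    ∀ c ∈ almostParallelClass43, c ∈ develop baseBlocks43 := by
  simp only [almostParallelClass43, List.forall_mem_cons, List.not_mem_nil, false_imp_iff,
    implies_true, and_true, mem_develop]
  and_intros <;> decide +kernel

lemma almostParallelClass43_pairwise_disjoint : almostParallelClass43.Pairwise Disjoint := by
  decide +kernel

lemma biUnion_almostParallelClass43 :
    almostParallelClass43.toFinset.biUnion id = univ.erase 0 := by
  decide +kernel

theorem stmt12 :
    ¬ sequenceable dev43 ∧
    (∀ x : ZMod 43, ∃ A : Finset (Finset (ZMod 43)),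
      isAPC dev43 A ∧ x ∉ A.biUnion id) := by
  have missing_zero : blocksPartition (develop baseBlocks43) (univ.erase 0) :=
    blocksPartition_of_pairwise_disjoint mem_develop_of_mem_almostParallelClass43
      almostParallelClass43_pairwise_disjoint biUnion_almostParallelClass43
  have exists_isAPC (x : ZMod 43) :
      ∃ A : Finset (Finset (ZMod 43)), isAPC dev43 A ∧ x ∉ A.biUnion id := by
    rw [← blocksPartition_univ_erase_iff_exists_isAPC, dev43_eq_develop]
    exact blocksPartition_develop_univ_erase missing_zero x
  have : Fact (1 < 43) := ⟨by norm_num⟩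
  exact ⟨not_sequenceable_of_forall_exists_isAPC exists_isAPC, exists_isAPC⟩
end
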